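/- Let m > 0, let M be a positive integer, let n be a positive integer, and let y ∈ ℝ. For s > 0 let ν_s denote the law of A(s) (the law of log₂(1 + γ s) for γ ∼ μ_m conditioned on {γ ≤ (2^M − 1)/s}), and let ν̄ denote the probability measure on ℝ with density f_Ā(ξ) = m (2^ξ − 1)^{m−1} 2^ξ ln 2 / (2^M − 1)^m on [0, M] and 0 otherwise. Then lim_{s → ∞} ν_s^{⊗n}( { a ∈ ℝ^n : Σ_{k=1}^n a_k < y } ) = ν̄^{⊗n}( { a ∈ ℝ^n : Σ_{k=1}^n a_k < y } ); that is, the cumulative distribution function of the sum of n i.i.d. copies of A(s) converges pointwise to that of the sum of n i.i.d. copies of the limiting random variable Ā. -/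

import Mathlib

open MeasureTheory ProbabilityTheory Real Filter

/-- Density of the Nakagami-m fading power gain (Gamma distribution, shape m, rate m). -/
noncomputable def fgamma (m x : ℝ) : ℝ :=
  if 0 ≤ x then m ^ m * x ^ (m - 1) * Real.exp (-(m * x)) / Real.Gamma m else 0

/-- The Nakagami-m fading power gain law μ_m. -/
noncomputable def muN (m : ℝ) : Measure ℝ :=
  MeasureTheory.volume.withDensity fun x => ENNReal.ofReal (fgamma m x)

/-- CDF of μ_m. -/
noncomputable def Fgamma (m x : ℝ) : ℝ := ∫ t in (0:ℝ)..x, fgamma m t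

/-- Law of A(s) = log₂(1+γs) for γ ∼ μ_m conditioned on {γ ≤ (2^M-1)/s}. -/
noncomputable def nuA (m : ℝ) (M : ℕ) (s : ℝ) : Measure ℝ :=
  Measure.map (fun x => Real.logb 2 (1 + x * s))
    ((muN m)[|{x : ℝ | x ≤ ((2:ℝ) ^ M - 1) / s}])


/-- The limiting density f_Ā. -/
noncomputable def fAbar (m : ℝ) (M : ℕ) (ξ : ℝ) : ℝ :=
  if 0 ≤ ξ ∧ ξ ≤ (M : ℝ) then
    m * ((2:ℝ) ^ ξ - 1) ^ (m - 1) * (2:ℝ) ^ ξ * Real.log 2 / ((2:ℝ) ^ M - 1) ^ m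
  else 0

/-- The law of the limiting random variable Ā. -/
noncomputable def nuAbar (m : ℝ) (M : ℕ) : Measure ℝ :=
  MeasureTheory.volume.withDensity fun ξ => ENNReal.ofReal (fAbar m M ξ)

/-!
The change of variables `x = (2 ^ ξ - 1) / s` turns the density `x ^ (m - 1) * exp (-m x)` on
`[0, (2 ^ M - 1) / s]` into a multiple of the density of `Ā` times `exp (-m (2 ^ ξ - 1) / s)`.
Hence the law of `A(s)` is an exponential tilting of the law of `Ā` by a function with values in
`[-m (2 ^ M - 1) / s, 0]`, and each of the two laws is at most `exp (m (2 ^ M - 1) / s)` times the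
other. Such bounds tensorize, and the constant tends to `1`.
-/

section MutualDomination

open scoped ENNReal Topology

variable {Ω α : Type*} [MeasurableSpace Ω] {l : Filter α}

lemma tendsto_measure_apply_of_le_smul {μ : α → Measure Ω} {ν : Measure Ω} {c : α → ℝ≥0∞}
    (hc : Tendsto c l (𝓝 1)) (hμν : ∀ᶠ a in l, μ a ≤ c a • ν) (hνμ : ∀ᶠ a in l, ν ≤ c a • μ a)
    (S : Set Ω) : Tendsto (fun a => μ a S) l (𝓝 (ν S)) := by
  have lower : Tendsto (fun a => (c a)⁻¹ * ν S) l (𝓝 (ν S)) := by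
    simpa using ENNReal.Tendsto.mul_const (b := ν S) (hc.inv) (by simp)
  have upper : Tendsto (fun a => c a * ν S) l (𝓝 (ν S)) := by
    simpa using ENNReal.Tendsto.mul_const (b := ν S) hc (by simp)
  refine tendsto_of_tendsto_of_tendsto_of_le_of_le' lower upper ?_ ?_
  · filter_upwards [hνμ] with a ha
    rw [mul_comm, ← div_eq_mul_inv]
    exact ENNReal.div_le_of_le_mul' (ha S)
  · filter_upwards [hμν] with a ha using ha S

variable {ι : Type*} [Fintype ι] {X : ι → Type*} [∀ i, MeasurableSpace (X i)]

lemma measurePi_le_pow_card_smul {μ ν : ∀ i, Measure (X i)} {c : ℝ≥0∞} (hc : c ≠ ∞)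
    (h : ∀ i, μ i ≤ c • ν i) :
    Measure.pi μ ≤ c ^ Fintype.card ι • Measure.pi ν := by
  have outer_le : OuterMeasure.pi (fun i => (μ i).toOuterMeasure) ≤
      c ^ Fintype.card ι • OuterMeasure.pi (fun i => (ν i).toOuterMeasure) := by
    rw [OuterMeasure.pi, OuterMeasure.pi, OuterMeasure.smul_boundedBy (ENNReal.pow_ne_top hc)]
    refine OuterMeasure.le_boundedBy'.2 fun s _ => (OuterMeasure.boundedBy_le s).trans ?_
    calc piPremeasure (fun i => (μ i).toOuterMeasure) s
        ≤ ∏ i, c * ν i (Function.eval i '' s) := Finset.prod_le_prod' fun i _ => h i _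
      _ = (c ^ Fintype.card ι • piPremeasure fun i => (ν i).toOuterMeasure) s := by
        simp [Finset.prod_mul_distrib, piPremeasure]
  refine Measure.le_iff.2 fun S hS => ?_
  simpa only [Measure.pi_def, Measure.smul_apply, toMeasure_apply _ _ hS] using! outer_le S

lemma tendsto_measurePi_apply_of_le_smul {μ : α → ∀ i, Measure (X i)} {ν : ∀ i, Measure (X i)}
    {c : α → ℝ≥0∞} (hc : Tendsto c l (𝓝 1)) (hμν : ∀ᶠ a in l, ∀ i, μ a i ≤ c a • ν i)
    (hνμ : ∀ᶠ a in l, ∀ i, ν i ≤ c a • μ a i) (S : Set (∀ i, X i)) :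
    Tendsto (fun a => Measure.pi (μ a) S) l (𝓝 (Measure.pi ν S)) := by
  have hc_top : ∀ᶠ a in l, c a ≠ ∞ := hc.eventually_ne ENNReal.one_ne_top
  have hc_pow : Tendsto (fun a => c a ^ Fintype.card ι) l (𝓝 1) := by
    simpa using ENNReal.Tendsto.pow (n := Fintype.card ι) hc
  refine tendsto_measure_apply_of_le_smul hc_pow ?_ ?_ S
  · filter_upwards [hc_top, hμν] with a ha h using measurePi_le_pow_card_smul ha h
  · filter_upwards [hc_top, hνμ] with a ha h using measurePi_le_pow_card_smul ha h

end MutualDomination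

section Tilting

variable {Ω : Type*} [MeasurableSpace Ω] {ν : Measure Ω} {f : Ω → ℝ} {a b : ℝ}

lemma exp_mem_Icc_of_mem_Icc {x : ℝ} (hx : x ∈ Set.Icc a b) : exp x ∈ Set.Icc (exp a) (exp b) :=
  ⟨exp_le_exp.2 hx.1, exp_le_exp.2 hx.2⟩

lemma integrable_exp_of_mem_Icc [IsFiniteMeasure ν] (hf : AEMeasurable f ν)
    (hfab : ∀ᵐ x ∂ν, f x ∈ Set.Icc a b) : Integrable (fun x => exp (f x)) ν :=
  .of_mem_Icc (exp a) (exp b) hf.exp (hfab.mono fun _ => exp_mem_Icc_of_mem_Icc)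

lemma tilted_le_exp_smul [IsProbabilityMeasure ν] (hf : AEMeasurable f ν)
    (hfab : ∀ᵐ x ∂ν, f x ∈ Set.Icc a b) :
    ν.tilted f ≤ ENNReal.ofReal (exp (b - a)) • ν := by
  have exp_le_integral : exp a ≤ ∫ x, exp (f x) ∂ν := by
    simpa using integral_mono_ae (integrable_const (exp a)) (integrable_exp_of_mem_Icc hf hfab)
      (hfab.mono fun x hx => exp_le_exp.2 hx.1)
  rw [Measure.tilted, ← withDensity_const]
  refine withDensity_mono (hfab.mono fun x hx => ENNReal.ofReal_le_ofReal ?_)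
  rw [exp_sub]
  exact div_le_div₀ (exp_pos b).le (exp_le_exp.2 hx.2) (exp_pos a) exp_le_integral

lemma le_exp_smul_tilted [IsProbabilityMeasure ν] (hf : AEMeasurable f ν)
    (hfab : ∀ᵐ x ∂ν, f x ∈ Set.Icc a b) :
    ν ≤ ENNReal.ofReal (exp (b - a)) • ν.tilted f := by
  have hexp := integrable_exp_of_mem_Icc hf hfab
  have : IsProbabilityMeasure (ν.tilted f) := isProbabilityMeasure_tilted hexp
  have hac : ν.tilted f ≪ ν := tilted_absolutelyContinuous ν f
  have hneg : ∀ᵐ x ∂ν.tilted f, (-f) x ∈ Set.Icc (-b) (-a) :=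
    hac.ae_le <| hfab.mono fun _ hx => ⟨neg_le_neg hx.2, neg_le_neg hx.1⟩
  simpa [tilted_neg_same hexp, neg_add_eq_sub] using
    tilted_le_exp_smul (hf.mono_ac hac).neg hneg

lemma inv_smul_eq_tilted_of_eq_smul_withDensity_exp [NeZero ν] {μ : Measure Ω} {c : ℝ}
    (hc : 0 < c) (hf : Integrable (fun x => exp (f x)) ν)
    (hμ : μ = ENNReal.ofReal c • ν.withDensity fun x => ENNReal.ofReal (exp (f x))) :
    (μ Set.univ)⁻¹ • μ = ν.tilted f := by
  have mass : μ Set.univ = ENNReal.ofReal (c * ∫ x, exp (f x) ∂ν) := by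
    rw [hμ, Measure.smul_apply, withDensity_apply _ .univ, setLIntegral_univ, smul_eq_mul,
      ← ofReal_integral_eq_lintegral_ofReal hf (.of_forall fun x => (exp_pos _).le),
      ENNReal.ofReal_mul hc.le]
  have hI : 0 < ∫ x, exp (f x) ∂ν := integral_exp_pos hf
  rw [mass, hμ, smul_smul, ← ENNReal.ofReal_inv_of_pos (mul_pos hc hI),
    ← ENNReal.ofReal_mul (by positivity), Measure.tilted,
    ← withDensity_smul' _ _ ENNReal.ofReal_ne_top]
  congr 1 with x
  rw [Pi.smul_apply, smul_eq_mul, ← ENNReal.ofReal_mul (by positivity)]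
  congr 1
  field_simp

end Tilting

section Density

open scoped ENNReal

lemma withDensity_eq_withDensity_restrict {Ω : Type*} [MeasurableSpace Ω] (μ : Measure Ω)
    {f : Ω → ℝ≥0∞} {s : Set Ω} (hs : MeasurableSet s) (hf : Function.support f ⊆ s) :
    μ.withDensity f = (μ.restrict s).withDensity f := by
  rw [← withDensity_indicator hs, Set.indicator_eq_self.2 hf]

lemma map_withDensity_restrict_image_of_leftInvOn {φ φ' T : ℝ → ℝ} {s : Set ℝ}
    (hs : MeasurableSet s) (hφ : ∀ x ∈ s, HasDerivWithinAt φ (φ' x) s x)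
    (hT : Measurable T) (hTφ : Set.LeftInvOn T φ s)
    (g : ℝ → ℝ≥0∞) :
    ((volume.restrict (φ '' s)).withDensity g).map T =
      (volume.restrict s).withDensity fun x => ENNReal.ofReal |φ' x| * g (φ x) := by
  ext B hB
  rw [Measure.map_apply hT hB, withDensity_apply _ (hT hB), withDensity_apply _ hB,
    Measure.restrict_restrict (hT hB), Measure.restrict_restrict hB, ← hTφ.image_inter',
    lintegral_image_eq_lintegral_abs_deriv_mul (hB.inter hs)
      (fun x hx => (hφ x hx.2).mono Set.inter_subset_right)
      (hTφ.injOn.mono Set.inter_subset_right)]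

end Density

/-- The fading power gain `x` at which the rate `log₂ (1 + x s)` equals `ξ`. -/
noncomputable def gainOfRate (s ξ : ℝ) : ℝ := ((2 : ℝ) ^ ξ - 1) / s

section GainOfRate

variable {s : ℝ}

@[simp]
lemma gainOfRate_zero (s : ℝ) : gainOfRate s 0 = 0 := by simp [gainOfRate]

lemma gainOfRate_natCast (s : ℝ) (M : ℕ) : gainOfRate s M = ((2 : ℝ) ^ M - 1) / s := by
  rw [gainOfRate, rpow_natCast]

lemma continuous_gainOfRate (s : ℝ) : Continuous (gainOfRate s) :=
  ((continuous_const_rpow two_ne_zero).sub continuous_const).div_const s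

lemma strictMono_gainOfRate (hs : 0 < s) : StrictMono (gainOfRate s) := fun _ _ h =>
  div_lt_div_of_pos_right
    (sub_lt_sub_right (rpow_lt_rpow_of_exponent_lt one_lt_two h) 1) hs

lemma gainOfRate_nonneg (hs : 0 < s) {ξ : ℝ} (hξ : 0 ≤ ξ) : 0 ≤ gainOfRate s ξ :=
  gainOfRate_zero s ▸ (strictMono_gainOfRate hs).monotone hξ

lemma hasDerivAt_gainOfRate (s ξ : ℝ) :
    HasDerivAt (gainOfRate s) (log 2 * (2 : ℝ) ^ ξ / s) ξ := by
  simpa using! (((hasDerivAt_id ξ).const_rpow two_pos).sub_const 1).div_const s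

lemma leftInverse_logb_gainOfRate (hs : s ≠ 0) :
    Function.LeftInverse (fun x => logb 2 (1 + x * s)) (gainOfRate s) := fun ξ => by
  simp only [gainOfRate, div_mul_cancel₀ _ hs, add_sub_cancel]
  exact logb_rpow two_pos (by norm_num)

lemma image_gainOfRate_Icc (hs : 0 < s) (M : ℕ) :
    gainOfRate s '' Set.Icc 0 M = Set.Icc 0 (((2 : ℝ) ^ M - 1) / s) := by
  rw [(continuous_gainOfRate s).image_Icc_of_strictMono (strictMono_gainOfRate hs),
    gainOfRate_zero, gainOfRate_natCast]

end GainOfRate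

section Nakagami

variable {m : ℝ} {M : ℕ} {s : ℝ}

lemma two_pow_sub_one_pos (hM : 0 < M) : 0 < (2 : ℝ) ^ M - 1 :=
  sub_pos.2 (one_lt_pow₀ one_lt_two hM.ne')

lemma two_rpow_sub_one_nonneg {ξ : ℝ} (hξ : 0 ≤ ξ) : 0 ≤ (2 : ℝ) ^ ξ - 1 :=
  sub_nonneg.2 (one_le_rpow one_le_two hξ)

lemma measurable_fAbar (m : ℝ) (M : ℕ) : Measurable (fAbar m M) :=
  Measurable.ite measurableSet_Icc (by fun_prop) measurable_const

lemma nuAbar_eq_withDensity_restrict (m : ℝ) (M : ℕ) :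
    nuAbar m M = (volume.restrict (Set.Icc (0 : ℝ) M)).withDensity
      fun ξ => ENNReal.ofReal (fAbar m M ξ) := by
  refine withDensity_eq_withDensity_restrict _ measurableSet_Icc ?_
  refine Function.support_subset_iff'.2 fun ξ hξ => ?_
  rw [fAbar, if_neg (Set.mem_Icc.not.1 hξ), ENNReal.ofReal_zero]

lemma ae_nuAbar_mem_Icc (m : ℝ) (M : ℕ) : ∀ᵐ ξ ∂nuAbar m M, ξ ∈ Set.Icc (0 : ℝ) M := by
  rw [nuAbar_eq_withDensity_restrict]
  exact (withDensity_absolutelyContinuous _ _).ae_le (ae_restrict_mem measurableSet_Icc)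

lemma muN_restrict_Iic (m a : ℝ) :
    (muN m).restrict (Set.Iic a) =
      (volume.restrict (Set.Icc 0 a)).withDensity fun x => ENNReal.ofReal (fgamma m x) := by
  have hsupp : Function.support (fun x => ENNReal.ofReal (fgamma m x)) ⊆ Set.Ici 0 :=
    Function.support_subset_iff'.2 fun x hx => by
      rw [fgamma, if_neg (Set.mem_Ici.not.1 hx), ENNReal.ofReal_zero]
  rw [muN, withDensity_eq_withDensity_restrict _ measurableSet_Ici hsupp,
    restrict_withDensity measurableSet_Iic, Measure.restrict_restrict measurableSet_Iic,
    Set.Iic_inter_Ici]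

lemma hasDerivAt_gainOfRate_rpow (hM : 0 < M) {ξ : ℝ} (hξ : ξ ∈ Set.Ioo (0 : ℝ) M) :
    HasDerivAt (fun η => gainOfRate ((2 : ℝ) ^ M - 1) η ^ m) (fAbar m M ξ) ξ := by
  have hC := two_pow_sub_one_pos hM
  have hpos : 0 < gainOfRate ((2 : ℝ) ^ M - 1) ξ := by
    simpa using strictMono_gainOfRate hC hξ.1
  convert (hasDerivAt_gainOfRate _ ξ).rpow_const (p := m) (.inl hpos.ne') using 1
  rw [fAbar, if_pos ⟨hξ.1.le, hξ.2.le⟩, gainOfRate,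
    div_rpow (two_rpow_sub_one_nonneg hξ.1.le) hC.le, rpow_sub_one hC.ne']
  field_simp

lemma isProbabilityMeasure_nuAbar (hm : 0 < m) (hM : 0 < M) :
    IsProbabilityMeasure (nuAbar m M) := by
  have hC := two_pow_sub_one_pos hM
  -- The distribution function of `Ā` on `[0, M]`.
  set G : ℝ → ℝ := fun ξ => gainOfRate ((2 : ℝ) ^ M - 1) ξ ^ m with hG
  have G_cont : Continuous G := (continuous_gainOfRate _).rpow_const fun _ => .inr hm.le
  have G_mono : StrictMonoOn G (Set.Icc 0 M) := fun ξ hξ η _ h =>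
    rpow_lt_rpow (gainOfRate_nonneg hC hξ.1) (strictMono_gainOfRate hC h) hm
  have G_image : G '' Set.Ioo 0 M = Set.Ioo 0 1 := by
    rw [G_cont.continuousOn.image_Ioo_of_strictMonoOn (Nat.cast_nonneg M) G_mono]
    simp only [hG, gainOfRate_zero, zero_rpow hm.ne', gainOfRate_natCast, div_self hC.ne',
      one_rpow]
  constructor
  calc nuAbar m M Set.univ
      = ∫⁻ ξ in Set.Ioo 0 (M : ℝ), ENNReal.ofReal (fAbar m M ξ) := by
        rw [nuAbar_eq_withDensity_restrict, withDensity_apply _ .univ, setLIntegral_univ,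
          setLIntegral_congr Ioo_ae_eq_Icc]
    _ = volume (G '' Set.Ioo 0 M) :=
        lintegral_deriv_eq_volume_image_of_monotoneOn measurableSet_Ioo
          (fun ξ hξ => (hasDerivAt_gainOfRate_rpow hM hξ).hasDerivWithinAt)
          (G_mono.monotoneOn.mono Set.Ioo_subset_Icc_self)
    _ = 1 := by simp [G_image]

/-- The leading term, as `s → ∞`, of the probability `μ_m {γ ≤ (2 ^ M - 1) / s}` of the
conditioning event, obtained by dropping the exponential factor of the Gamma density. -/
noncomputable def truncationMass (m : ℝ) (M : ℕ) (s : ℝ) : ℝ :=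
  (m * ((2 : ℝ) ^ M - 1) / s) ^ m / Gamma (m + 1)

lemma truncationMass_pos (hm : 0 < m) (hM : 0 < M) (hs : 0 < s) : 0 < truncationMass m M s := by
  have hC := two_pow_sub_one_pos hM
  exact div_pos (rpow_pos_of_pos (by positivity) m) (Gamma_pos_of_pos (by positivity))

lemma abs_deriv_gainOfRate_mul_fgamma (hm : 0 < m) (hM : 0 < M) (hs : 0 < s) {ξ : ℝ}
    (hξ : ξ ∈ Set.Icc (0 : ℝ) M) :
    |log 2 * (2 : ℝ) ^ ξ / s| * fgamma m (gainOfRate s ξ) =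
      fAbar m M ξ * (truncationMass m M s * exp (-(m * gainOfRate s ξ))) := by
  have hC := two_pow_sub_one_pos hM
  have gain_rpow : gainOfRate s ξ ^ (m - 1) = ((2 : ℝ) ^ ξ - 1) ^ (m - 1) * s / s ^ m := by
    rw [gainOfRate, div_rpow (two_rpow_sub_one_nonneg hξ.1) hs.le, rpow_sub_one hs.ne',
      div_div_eq_mul_div]
  have mass : truncationMass m M s =
      m ^ m * ((2 : ℝ) ^ M - 1) ^ m / s ^ m / (m * Gamma m) := by
    rw [truncationMass, Gamma_add_one hm.ne', div_rpow (by positivity) hs.le,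
      mul_rpow hm.le hC.le]
  rw [abs_of_nonneg (by positivity), fgamma, if_pos (gainOfRate_nonneg hs hξ.1), fAbar,
    if_pos (Set.mem_Icc.1 hξ), gain_rpow, mass]
  field_simp [(Gamma_pos_of_pos hm).ne']

lemma measurable_neg_mul_gainOfRate (m s : ℝ) : Measurable fun ξ => -(m * gainOfRate s ξ) :=
  ((continuous_gainOfRate s).measurable.const_mul m).neg

lemma map_logb_muN_restrict (hm : 0 < m) (hM : 0 < M) (hs : 0 < s) :
    ((muN m).restrict (Set.Iic (((2 : ℝ) ^ M - 1) / s))).map (fun x => logb 2 (1 + x * s)) =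
      ENNReal.ofReal (truncationMass m M s) •
        (nuAbar m M).withDensity fun ξ => ENNReal.ofReal (exp (-(m * gainOfRate s ξ))) := by
  have hK := truncationMass_pos hm hM hs
  have hexp : Measurable fun ξ => ENNReal.ofReal (exp (-(m * gainOfRate s ξ))) :=
    (measurable_neg_mul_gainOfRate m s).exp.ennreal_ofReal
  rw [muN_restrict_Iic, ← image_gainOfRate_Icc hs,
    map_withDensity_restrict_image_of_leftInvOn measurableSet_Icc
      (fun ξ _ => (hasDerivAt_gainOfRate s ξ).hasDerivWithinAt) (by unfold logb; fun_prop)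
      fun ξ _ => leftInverse_logb_gainOfRate hs.ne' ξ,
    nuAbar_eq_withDensity_restrict, ← withDensity_smul _ hexp,
    ← withDensity_mul _ (measurable_fAbar m M).ennreal_ofReal (hexp.const_smul _)]
  refine withDensity_congr_ae ((ae_restrict_mem measurableSet_Icc).mono fun ξ hξ => ?_)
  simp only [Pi.mul_apply, Pi.smul_apply, smul_eq_mul]
  rw [← ENNReal.ofReal_mul (abs_nonneg _), abs_deriv_gainOfRate_mul_fgamma hm hM hs hξ,
    ENNReal.ofReal_mul' (by positivity), ENNReal.ofReal_mul hK.le]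

lemma neg_mul_gainOfRate_mem_Icc (hm : 0 ≤ m) (hs : 0 < s) {ξ : ℝ}
    (hξ : ξ ∈ Set.Icc (0 : ℝ) M) :
    -(m * gainOfRate s ξ) ∈ Set.Icc (-(m * (((2 : ℝ) ^ M - 1) / s))) 0 := by
  rw [← gainOfRate_natCast]
  exact ⟨neg_le_neg (mul_le_mul_of_nonneg_left ((strictMono_gainOfRate hs).monotone hξ.2) hm),
    neg_nonpos.2 (mul_nonneg hm (gainOfRate_nonneg hs hξ.1))⟩

lemma nuA_eq_tilted_nuAbar (hm : 0 < m) (hM : 0 < M) (hs : 0 < s) :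
    nuA m M s = (nuAbar m M).tilted fun ξ => -(m * gainOfRate s ξ) := by
  have := isProbabilityMeasure_nuAbar hm hM
  set T : ℝ → ℝ := fun x => logb 2 (1 + x * s)
  have hT : Measurable T := by unfold T logb; fun_prop
  have hexp := integrable_exp_of_mem_Icc (measurable_neg_mul_gainOfRate m s).aemeasurable
    ((ae_nuAbar_mem_Icc m M).mono fun _ => neg_mul_gainOfRate_mem_Icc hm.le hs)
  rw [← inv_smul_eq_tilted_of_eq_smul_withDensity_exp (truncationMass_pos hm hM hs) hexp
    (map_logb_muN_restrict hm hM hs), Measure.map_apply hT .univ, Set.preimage_univ,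
    Measure.restrict_apply_univ, nuA, ProbabilityTheory.cond, Measure.map_smul]
  rfl

lemma nuA_le_smul_nuAbar (hm : 0 < m) (hM : 0 < M) (hs : 0 < s) :
    nuA m M s ≤ ENNReal.ofReal (exp (m * (((2 : ℝ) ^ M - 1) / s))) • nuAbar m M := by
  have := isProbabilityMeasure_nuAbar hm hM
  simpa [nuA_eq_tilted_nuAbar hm hM hs] using
    tilted_le_exp_smul (measurable_neg_mul_gainOfRate m s).aemeasurable
      ((ae_nuAbar_mem_Icc m M).mono fun _ => neg_mul_gainOfRate_mem_Icc hm.le hs)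

lemma nuAbar_le_smul_nuA (hm : 0 < m) (hM : 0 < M) (hs : 0 < s) :
    nuAbar m M ≤ ENNReal.ofReal (exp (m * (((2 : ℝ) ^ M - 1) / s))) • nuA m M s := by
  have := isProbabilityMeasure_nuAbar hm hM
  simpa [nuA_eq_tilted_nuAbar hm hM hs] using
    le_exp_smul_tilted (measurable_neg_mul_gainOfRate m s).aemeasurable
      ((ae_nuAbar_mem_Icc m M).mono fun _ => neg_mul_gainOfRate_mem_Icc hm.le hs)

end Nakagami

theorem stmt_14_general {m : ℝ} (hm : 0 < m) {M : ℕ} (hM : 0 < M) {ι : Type*} [Fintype ι]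
    (S : Set (ι → ℝ)) :
    Tendsto (fun s : ℝ => ((Measure.pi fun _ : ι => nuA m M s) S).toReal) atTop
      (nhds ((Measure.pi fun _ : ι => nuAbar m M) S).toReal) := by
  have := isProbabilityMeasure_nuAbar hm hM
  have hc : Tendsto (fun s : ℝ => ENNReal.ofReal (exp (m * (((2 : ℝ) ^ M - 1) / s)))) atTop
      (nhds 1) := by
    have hexponent : Tendsto (fun s : ℝ => m * (((2 : ℝ) ^ M - 1) / s)) atTop (nhds 0) := by
      simpa using (tendsto_const_nhds.div_atTop tendsto_id).const_mul m
    simpa using ENNReal.tendsto_ofReal ((continuous_exp.tendsto 0).comp hexponent)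
  refine (ENNReal.tendsto_toReal (measure_ne_top _ S)).comp
    (tendsto_measurePi_apply_of_le_smul hc ?_ ?_ S)
  · filter_upwards [eventually_gt_atTop 0] with s hs using fun _ => nuA_le_smul_nuAbar hm hM hs
  · filter_upwards [eventually_gt_atTop 0] with s hs using fun _ => nuAbar_le_smul_nuA hm hM hs

/-- the CDF of the sum of n i.i.d. copies of A(s) converges pointwise, as
s → ∞, to the CDF of the sum of n i.i.d. copies of Ā. -/
theorem stmt_14 (m : ℝ) (hm : 0 < m) (M : ℕ) (hM : 0 < M) (n : ℕ) (hn : 0 < n) (y : ℝ) :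
    Filter.Tendsto (fun s : ℝ =>
        ((Measure.pi fun _ : Fin n => nuA m M s) {a : Fin n → ℝ | ∑ k, a k < y}).toReal)
      Filter.atTop
      (nhds (((Measure.pi fun _ : Fin n => nuAbar m M)
        {a : Fin n → ℝ | ∑ k, a k < y}).toReal)) :=
  stmt_14_general hm hM _
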